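/- Let n ≥ 1 be an integer, let α ∈ (0,1), s ∈ (0,1), p > 0, and let Ω ⊂ ℝ^{n+1} be an open convex set. Then there exists a constant C > 0, depending only on n, α, s, and p, such that for every μH[n]-measurable subset E ⊂ ∂Ω with 0 < |E| < ∞ and for μH[n]-a.e. x ∈ E one has |E|^{−sp/n} ≤ C · ( ∫_{∂Ω∖E} |x − y|^{−(n+sp)} dy + H_α(x)^{sp/α} ). -/

import Mathlib

open MeasureTheory Set Filter Metric
open scoped ENNReal NNReal

/-- The truncated integral defining the fractional `α`-mean curvature of `Ω` at `x`. -/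
noncomputable def fracMCIntegral (n : ℕ) (α : ℝ) (Ω : Set (EuclideanSpace ℝ (Fin (n+1))))
    (x : EuclideanSpace ℝ (Fin (n+1))) (ε : ℝ) : ℝ :=
  (α/2) * ∫ y in {y : EuclideanSpace ℝ (Fin (n+1)) | ε < dist y x},
      ((Ωᶜ.indicator (fun _ => (1:ℝ)) y) - (Ω.indicator (fun _ => (1:ℝ)) y))
        * (dist y x) ^ (-((n:ℝ)+1+α)) ∂volume

/-- `h` is the fractional `α`-mean curvature of `Ω` at `x` (principal value limit). -/
def IsFracMeanCurv (n : ℕ) (α : ℝ) (Ω : Set (EuclideanSpace ℝ (Fin (n+1))))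
    (x : EuclideanSpace ℝ (Fin (n+1))) (h : ℝ) : Prop :=
  Filter.Tendsto (fracMCIntegral n α Ω x) (nhdsWithin 0 (Set.Ioi 0)) (nhds h)

/-- A preconnected set that meets both an open set and its complement meets the frontier. -/
theorem IsPreconnected.exists_mem_frontier_of_isOpen {X : Type*} [TopologicalSpace X]
    {S Ω : Set X} (hS : IsPreconnected S) (hΩ : IsOpen Ω) {y z : X}
    (hyS : y ∈ S) (hzS : z ∈ S) (hy : y ∈ Ω) (hz : z ∉ Ω) : ∃ w ∈ S, w ∈ frontier Ω := by
  by_contra! h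
  have hcover : S ⊆ Ω ∪ (closure Ω)ᶜ := fun w hw => by
    by_cases hwΩ : w ∈ Ω
    · exact Or.inl hwΩ
    · exact Or.inr fun hc => h w hw (hΩ.frontier_eq ▸ ⟨hc, hwΩ⟩)
  obtain ⟨w, -, hw, hw'⟩ := hS Ω (closure Ω)ᶜ hΩ isClosed_closure.isOpen_compl hcover
    ⟨y, hyS, hy⟩ ⟨z, hzS, (hcover hzS).resolve_left hz⟩
  exact hw' (subset_closure hw)

/-- An open convex set has a unit outer normal at every point outside of it. -/
theorem exists_unit_normal {X : Type*} [NormedAddCommGroup X] [InnerProductSpace ℝ X]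
    [CompleteSpace X] {Ω : Set X} (ho : IsOpen Ω) (hc : Convex ℝ Ω) (hne : Ω.Nonempty)
    {x : X} (hx : x ∉ Ω) : ∃ ν : X, ‖ν‖ = 1 ∧ ∀ y ∈ Ω, inner ℝ ν y < inner ℝ ν x := by
  obtain ⟨f, hf⟩ := geometric_hahn_banach_open_point hc ho hx
  set u := (InnerProductSpace.toDual ℝ X).symm f
  have hu : ∀ y, inner ℝ u y = f y := fun y => InnerProductSpace.toDual_symm_apply
  have hu0 : u ≠ 0 := by
    intro h0
    obtain ⟨y, hy⟩ := hne
    have := hf y hy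
    simp [← hu, h0] at this
  refine ⟨‖u‖⁻¹ • u, norm_smul_inv_norm hu0, fun y hy => ?_⟩
  simp only [real_inner_smul_left, hu]
  exact mul_lt_mul_of_pos_left (hf y hy) (by positivity)

/-- Any unit vector is the first vector of some orthonormal basis. -/
theorem exists_orthonormalBasis_zero_eq {n : ℕ} {ν : EuclideanSpace ℝ (Fin (n+1))}
    (hν : ‖ν‖ = 1) :
    ∃ b : OrthonormalBasis (Fin (n+1)) ℝ (EuclideanSpace ℝ (Fin (n+1))), b 0 = ν := by
  have ho : Orthonormal ℝ (({0} : Set (Fin (n+1))).domRestrict fun _ => ν) := by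
    refine ⟨fun _ => hν, fun i j hij => ?_⟩
    exact absurd (Subsingleton.elim i j) hij
  obtain ⟨b, hb⟩ := ho.exists_orthonormalBasis_extension_of_card_eq (by simp)
  exact ⟨b, hb 0 rfl⟩

/-- The volume of a bounded part of an open convex set is controlled by the area of the
boundary: project along the outer normal at `x`. -/
theorem volume_inter_ball_le_hausdorffMeasure_frontier {n : ℕ}
    {Ω : Set (EuclideanSpace ℝ (Fin (n+1)))} (ho : IsOpen Ω) (hc : Convex ℝ Ω)
    {x : EuclideanSpace ℝ (Fin (n+1))} (hx : x ∉ Ω) (R : ℝ) :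
    volume (Ω ∩ ball x R) ≤ ENNReal.ofReal (2 * R) * μH[(n:ℝ)] (frontier Ω ∩ ball x R) := by
  rcases Ω.eq_empty_or_nonempty with rfl | hne
  · simp
  obtain ⟨ν, hν, hsep⟩ := exists_unit_normal ho hc hne hx
  obtain ⟨b, hb⟩ := exists_orthonormalBasis_zero_eq hν
  set P : EuclideanSpace ℝ (Fin (n+1)) → Fin n → ℝ := fun y i => b.repr y i.succ
  have hcoord : ∀ y z i, |b.repr y i - b.repr z i| ≤ dist y z := fun y z i => by
    have := PiLp.norm_apply_le (b.repr (y - z)) i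
    rw [LinearIsometryEquiv.norm_map, ← dist_eq_norm] at this
    simpa using this
  have hP : LipschitzWith 1 P := LipschitzWith.of_dist_le_mul fun y z => by
    rw [NNReal.coe_one, one_mul, dist_pi_le_iff dist_nonneg]
    exact fun i => hcoord y z i.succ
  have hPν : ∀ y (t : ℝ), P (y + t • ν) = P y := fun y t => by
    funext i
    simp [P, ← hb]
  have hshadow : P '' (Ω ∩ ball x R) ⊆ P '' (frontier Ω ∩ ball x R) := by
    rintro _ ⟨y, ⟨hyΩ, hyR⟩, rfl⟩
    set t : ℝ := inner ℝ ν (x - y) with ht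
    have hνν : inner ℝ ν ν = (1:ℝ) := by simp [hν]
    have hzΩ : y + t • ν ∉ Ω := fun hz => by
      have := hsep _ hz
      rw [inner_add_right, real_inner_smul_right, hνν, ht, inner_sub_right] at this
      linarith
    have hzR : y + t • ν ∈ ball x R := by
      rw [mem_ball_iff_norm] at hyR ⊢
      refine lt_of_le_of_lt (abs_le_of_sq_le_sq' ?_ (norm_nonneg _)).2 hyR
      have h1 : y + t • ν - x = (y - x) + t • ν := by abel
      have h2 : inner ℝ (y - x) ν = -t := by
        rw [ht, real_inner_comm, ← inner_neg_right, neg_sub]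
      rw [h1, norm_add_sq_real, real_inner_smul_right, h2, norm_smul, hν, mul_one,
        Real.norm_eq_abs, sq_abs]
      nlinarith [sq_nonneg t]
    obtain ⟨w, hw, hwf⟩ := (convex_segment y (y + t • ν)).isPreconnected
      |>.exists_mem_frontier_of_isOpen ho (left_mem_segment ℝ _ _) (right_mem_segment ℝ _ _)
      hyΩ hzΩ
    refine ⟨w, ⟨hwf, (convex_ball x R).segment_subset hyR hzR hw⟩, ?_⟩
    rw [segment_eq_image'] at hw
    obtain ⟨θ, -, rfl⟩ := hw
    simp only [add_sub_cancel_left, smul_smul, hPν]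
  set Φ : EuclideanSpace ℝ (Fin (n+1)) → ℝ × (Fin n → ℝ) := fun y => (b.repr y 0, P y)
  have hΦ : MeasurePreserving Φ := by
    have := (volume_preserving_piFinSuccAbove (fun _ : Fin (n+1) => ℝ) 0).comp
      ((PiLp.volume_preserving_ofLp (Fin (n+1))).comp b.repr.measurePreserving)
    exact this
  calc volume (Ω ∩ ball x R)
      ≤ volume (Φ ⁻¹' (closedBall (b.repr x 0) R ×ˢ (P '' (frontier Ω ∩ ball x R)))) :=
        measure_mono fun y hy =>
          ⟨(hcoord y x 0).trans (mem_ball.1 hy.2).le, hshadow (mem_image_of_mem P hy)⟩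
    _ ≤ volume (closedBall (b.repr x 0) R ×ˢ (P '' (frontier Ω ∩ ball x R))) := by
        rw [← hΦ.map_eq]
        exact Measure.le_map_apply hΦ.measurable.aemeasurable _
    _ = ENNReal.ofReal (2 * R) * μH[(n:ℝ)] (P '' (frontier Ω ∩ ball x R)) := by
        have := hausdorffMeasure_pi_real (ι := Fin n)
        rw [Fintype.card_fin] at this
        rw [Measure.volume_eq_prod, Measure.prod_prod, Real.volume_closedBall, this]
    _ ≤ _ := by
        gcongr
        simpa using hP.hausdorffMeasure_image_le (d := n) (by positivity) (frontier Ω ∩ ball x R)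

/-- A negative power of the distance is integrable away from the pole if it decays fast enough. -/
theorem integrableOn_dist_rpow_neg {X : Type*} [NormedAddCommGroup X] [NormedSpace ℝ X]
    [FiniteDimensional ℝ X] [MeasurableSpace X] [BorelSpace X] (μ : Measure X)
    [μ.IsAddHaarMeasure] {r : ℝ} (hr : (Module.finrank ℝ X : ℝ) < r) (x : X) {ε : ℝ}
    (hε : 0 < ε) : IntegrableOn (fun y => dist y x ^ (-r)) {y | ε < dist y x} μ := by
  have hr0 : 0 < r := lt_of_le_of_lt (by positivity) hr
  have hm : MeasurableSet {y | ε < dist y x} := measurableSet_lt measurable_const (by fun_prop)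
  have h1 : Integrable (fun y => (ε / (1 + ε)) ^ (-r) * (1 + ‖y - x‖) ^ (-r)) μ :=
    ((integrable_one_add_norm hr).comp_sub_right x).const_mul _
  refine h1.integrableOn.mono' (Measurable.pow_const (by fun_prop) _).aestronglyMeasurable ?_
  refine (ae_restrict_mem hm).mono fun y (hy : ε < dist y x) => ?_
  rw [Real.norm_of_nonneg (by positivity), ← Real.mul_rpow (by positivity) (by positivity),
    ← dist_eq_norm]
  refine Real.rpow_le_rpow_of_nonpos (by positivity) ?_ (by linarith)
  rw [div_mul_eq_mul_div, div_le_iff₀ (by positivity)]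
  nlinarith

/-- Two functions whose symmetrizations about a point are ordered have ordered integrals. -/
theorem integral_le_integral_of_reflection_add_le {X : Type*} [AddCommGroup X]
    [MeasurableSpace X] [MeasurableAdd X] [MeasurableNeg X] {μ : Measure X}
    [μ.IsAddLeftInvariant] [μ.IsNegInvariant]
    {F G : X → ℝ} (hF : Integrable F μ) (hG : Integrable G μ) (c : X)
    (h : ∀ y, G y + G (c - y) ≤ F y + F (c - y)) : ∫ y, G y ∂μ ≤ ∫ y, F y ∂μ := by
  have key := integral_mono (hG.add (hG.comp_sub_left c)) (hF.add (hF.comp_sub_left c)) h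
  simp only [Pi.add_apply] at key
  rw [integral_add hG (hG.comp_sub_left c), integral_add hF (hF.comp_sub_left c),
    integral_sub_left_eq_self G μ c, integral_sub_left_eq_self F μ c] at key
  linarith

/-- The truncated fractional mean curvature of a convex set at an outside point is bounded below
by the deficit of the set in a centrally symmetric region. -/
theorem le_fracMCIntegral {n : ℕ} {α : ℝ} (hα : 0 < α)
    {Ω : Set (EuclideanSpace ℝ (Fin (n+1)))} (ho : IsOpen Ω) (hc : Convex ℝ Ω)
    {x : EuclideanSpace ℝ (Fin (n+1))} (hx : x ∉ Ω) {ε R : ℝ} (hε : 0 < ε)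
    {A : Set (EuclideanSpace ℝ (Fin (n+1)))} (hA : MeasurableSet A)
    (hAsymm : ∀ y, x + x - y ∈ A ↔ y ∈ A) (hAε : ∀ y ∈ A, ε < dist y x)
    (hAR : A ⊆ ball x R) :
    α / 2 * (R ^ (-((n:ℝ) + 1 + α)) * (volume.real A - 2 * volume.real (A ∩ Ω)))
      ≤ fracMCIntegral n α Ω x ε := by
  set r : ℝ := (n:ℝ) + 1 + α with hr
  have hr0 : 0 < r := by positivity
  set S : Set (EuclideanSpace ℝ (Fin (n+1))) := {y | ε < dist y x}
  have hS : MeasurableSet S := measurableSet_lt measurable_const (by fun_prop)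
  have hAfin : volume A ≠ ⊤ := ((measure_mono hAR).trans_lt measure_ball_lt_top).ne
  have hσ : ∀ y, dist (x + x - y) x = dist y x := fun y => by
    rw [dist_eq_norm, dist_eq_norm, ← norm_neg]
    congr 1
    abel
  set g : EuclideanSpace ℝ (Fin (n+1)) → ℝ := fun y =>
    (Ωᶜ.indicator (fun _ => (1:ℝ)) y - Ω.indicator (fun _ => (1:ℝ)) y) * dist y x ^ (-r)
  have hgi : ∀ y ∈ Ω, g y = -dist y x ^ (-r) := fun y hy => by simp [g, hy]
  have hgo : ∀ y ∉ Ω, g y = dist y x ^ (-r) := fun y hy => by simp [g, hy]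
  have hg : IntegrableOn g S := by
    have hw : IntegrableOn (fun y => dist y x ^ (-r)) S :=
      integrableOn_dist_rpow_neg volume (by simp [hr, hα]) x hε
    refine hw.mono' (Measurable.aestronglyMeasurable ?_) (ae_of_all _ fun y => ?_)
    · exact ((measurable_const.indicator ho.measurableSet.compl).sub
        (measurable_const.indicator ho.measurableSet)).mul
        (Measurable.pow_const (by fun_prop) _)
    · have h0 : 0 ≤ dist y x ^ (-r) := by positivity
      by_cases hy : y ∈ Ω
      · rw [hgi y hy, norm_neg, Real.norm_of_nonneg h0]
      · rw [hgo y hy, Real.norm_of_nonneg h0]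
  set c : ℝ := R ^ (-r)
  set G : EuclideanSpace ℝ (Fin (n+1)) → ℝ := fun y =>
    A.indicator (fun _ => c) y - (A ∩ Ω).indicator (fun _ => 2 * c) y
  have hAΩ : MeasurableSet (A ∩ Ω) := hA.inter ho.measurableSet
  have hAΩfin : volume (A ∩ Ω) ≠ ⊤ := ((measure_mono inter_subset_left).trans_lt hAfin.lt_top).ne
  have hG1 : Integrable (A.indicator fun _ => c) :=
    (integrable_indicator_iff hA).2 (integrableOn_const hAfin)
  have hG2 : Integrable ((A ∩ Ω).indicator fun _ => 2 * c) :=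
    (integrable_indicator_iff hAΩ).2 (integrableOn_const hAΩfin)
  have hGint : ∫ y, G y = c * (volume.real A - 2 * volume.real (A ∩ Ω)) := by
    rw [integral_sub hG1 hG2, integral_indicator_const _ hA, integral_indicator_const _ hAΩ]
    simp only [smul_eq_mul]
    ring
  have hnot : ∀ y ∈ Ω, x + x - y ∉ Ω := fun y hy hy' => hx <| by
    have h2 := hc hy hy' (a := 1/2) (b := 1/2) (by norm_num) (by norm_num) (by norm_num)
    rwa [← smul_add, add_sub_cancel, ← two_smul ℝ x, smul_smul, one_div,
      inv_mul_cancel₀ two_ne_zero, one_smul] at h2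
  have hSσ : ∀ y, x + x - y ∈ S ↔ y ∈ S := fun y => by simp [S, hσ]
  rw [fracMCIntegral, ← hGint, ← integral_indicator hS]
  refine mul_le_mul_of_nonneg_left ?_ (by positivity)
  refine integral_le_integral_of_reflection_add_le ((integrable_indicator_iff hS).2 hg)
    (hG1.sub hG2) (x + x) fun y => ?_
  have h0 : 0 ≤ dist y x ^ (-r) := by positivity
  change G y + G (x + x - y) ≤ S.indicator g y + S.indicator g (x + x - y)
  by_cases hyA : y ∈ A
  · have hyS : y ∈ S := hAε y hyA
    have hc : c ≤ dist y x ^ (-r) := Real.rpow_le_rpow_of_nonpos (hε.trans (hAε y hyA))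
      (mem_ball.1 (hAR hyA)).le (by linarith)
    by_cases hy : y ∈ Ω
    · have := hnot y hy
      simp [G, hyA, hAsymm, hSσ, hyS, hgi y hy, hgo _ this, hσ, hy, this]
      linarith
    · by_cases hy' : x + x - y ∈ Ω
      · simp [G, hyA, hAsymm, hSσ, hyS, hgo y hy, hgi _ hy', hσ, hy, hy']
        linarith
      · simp [G, hyA, hAsymm, hSσ, hyS, hgo y hy, hgo _ hy', hσ, hy, hy']
        linarith
  · by_cases hyS : y ∈ S
    · by_cases hy : y ∈ Ω
      · simp [G, hyA, hAsymm, hSσ, hyS, hgi y hy, hgo _ (hnot y hy), hσ]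
      · by_cases hy' : x + x - y ∈ Ω
        · simp [G, hyA, hAsymm, hSσ, hyS, hgo y hy, hgi _ hy', hσ]
        · simp [G, hyA, hAsymm, hSσ, hyS, hgo y hy, hgo _ hy', hσ]
          linarith
    · simp [G, hyA, hAsymm, hSσ, hyS]

/-- At every scale, either the fractional mean curvature of a convex set is large, or its boundary
has large area. -/
theorem fracMeanCurv_ge_or_hausdorffMeasure_frontier_ge {n : ℕ} {α : ℝ} (hα : 0 < α)
    {Ω : Set (EuclideanSpace ℝ (Fin (n+1)))} (ho : IsOpen Ω) (hc : Convex ℝ Ω)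
    {x : EuclideanSpace ℝ (Fin (n+1))} (hx : x ∉ Ω) {h : ℝ} (hh : IsFracMeanCurv n α Ω x h)
    {v R : ℝ} (hv : v = volume.real (ball (0 : EuclideanSpace ℝ (Fin (n+1))) 1)) (hR : 0 < R) :
    α * v / 8 * R ^ (-α) ≤ h ∨
      ENNReal.ofReal (v / 16 * R ^ n) ≤ μH[(n:ℝ)] (frontier Ω ∩ ball x R) := by
  have hv0 : 0 ≤ v := hv ▸ measureReal_nonneg
  set A := ball x R \ closedBall x (R / 2)
  have hA : MeasurableSet A := measurableSet_ball.diff measurableSet_closedBall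
  have hvolA : v / 2 * R ^ (n + 1) ≤ volume.real A := by
    have hsub : closedBall x (R / 2) ⊆ ball x R := closedBall_subset_ball (by linarith)
    rw [measureReal_sdiff hsub measurableSet_closedBall, Measure.real, Measure.real,
      Measure.addHaar_ball _ _ hR.le, Measure.addHaar_closedBall _ _ (by positivity),
      ENNReal.toReal_mul, ENNReal.toReal_mul, ENNReal.toReal_ofReal (by positivity),
      ENNReal.toReal_ofReal (by positivity), finrank_euclideanSpace_fin, ← Measure.real, ← hv,
      div_pow]
    have h2 : (2:ℝ) ≤ 2 ^ (n + 1) := le_self_pow₀ (by norm_num) (by positivity)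
    have h3 : R ^ (n + 1) / 2 ^ (n + 1) ≤ R ^ (n + 1) / 2 := by gcongr
    nlinarith [mul_le_mul_of_nonneg_right h3 hv0]
  rcases le_or_gt (v / 8 * R ^ (n + 1)) (volume.real (A ∩ Ω)) with hbig | hsmall
  · right
    have h1 := volume_inter_ball_le_hausdorffMeasure_frontier ho hc hx R
    have h2 : ENNReal.ofReal (v / 8 * R ^ (n + 1)) ≤ volume (Ω ∩ ball x R) :=
      (ENNReal.ofReal_le_of_le_toReal hbig).trans
        (measure_mono fun y hy => ⟨hy.2, hy.1.1⟩)
    have h3 : v / 8 * R ^ (n + 1) = (2 * R) * (v / 16 * R ^ n) := by ring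
    rw [h3, ENNReal.ofReal_mul (by positivity)] at h2
    exact (ENNReal.mul_le_mul_iff_right (by simpa using hR) ENNReal.ofReal_ne_top).1 (h2.trans h1)
  · left
    refine ge_of_tendsto hh ?_
    filter_upwards [Ioc_mem_nhdsGT (half_pos hR)] with ε hε
    refine le_trans ?_ (le_fracMCIntegral hα ho hc hx (R := R) hε.1 hA (fun y => ?_)
      (fun y hy => ?_) sdiff_subset)
    · have h1 : v / 4 * R ^ (n + 1) ≤ volume.real A - 2 * volume.real (A ∩ Ω) := by linarith
      have h2 : R ^ (-((n:ℝ) + 1 + α)) * R ^ (n + 1) = R ^ (-α) := by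
        rw [← Real.rpow_natCast, ← Real.rpow_add hR]
        congr 1
        push_cast
        ring
      calc α * v / 8 * R ^ (-α)
          = α / 2 * (R ^ (-((n:ℝ) + 1 + α)) * (v / 4 * R ^ (n + 1))) := by rw [← h2]; ring
        _ ≤ _ := by gcongr
    · have hσ : dist (x + x - y) x = dist y x := by
        rw [dist_eq_norm, dist_eq_norm, ← norm_neg]
        congr 1
        abel
      simp [A, mem_ball, mem_closedBall, hσ]
    · exact hε.2.trans_lt (not_le.1 hy.2)

/-- If the area of the boundary in `ball x R` is at least `2 |E|`, the nonlocal term is large. -/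
theorem mul_le_setLIntegral_diff {X : Type*} [MetricSpace X] [MeasurableSpace X] [BorelSpace X]
    {μ : Measure X} {F E : Set X} (hF : MeasurableSet F) (hE : MeasurableSet E) {x : X}
    (hx : x ∈ E) (hEfin : μ E ≠ ⊤) {q R : ℝ} (hq : 0 ≤ q)
    (hbig : 2 * μ E ≤ μ (F ∩ ball x R)) :
    ENNReal.ofReal (R ^ (-q)) * μ E ≤ ∫⁻ y in F \ E, ENNReal.ofReal (dist x y ^ (-q)) ∂μ := by
  have h1 : μ E ≤ μ ((F ∩ ball x R) \ E) := by
    refine le_trans ?_ le_measure_sdiff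
    rw [two_mul] at hbig
    exact ENNReal.le_sub_of_add_le_left hEfin hbig
  calc ENNReal.ofReal (R ^ (-q)) * μ E
      ≤ ENNReal.ofReal (R ^ (-q)) * μ ((F ∩ ball x R) \ E) := by gcongr
    _ = ∫⁻ _ in (F ∩ ball x R) \ E, ENNReal.ofReal (R ^ (-q)) ∂μ := (setLIntegral_const _ _).symm
    _ ≤ ∫⁻ y in (F ∩ ball x R) \ E, ENNReal.ofReal (dist x y ^ (-q)) ∂μ := by
        refine setLIntegral_mono' ((hF.inter measurableSet_ball).diff hE) fun y hy => ?_
        have hxy : x ≠ y := fun h => hy.2 (h ▸ hx)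
        refine ENNReal.ofReal_le_ofReal (Real.rpow_le_rpow_of_nonpos (dist_pos.2 hxy) ?_
          (by linarith))
        exact (mem_ball'.1 hy.1.2).le
    _ ≤ _ := lintegral_mono_set (sdiff_subset_sdiff_left inter_subset_left)

/-- Key pointwise inequality: for a subset `E` of the boundary of a convex set,
`|E|^{-sp/n} ≤ C (∫_{∂Ω∖E} |x-y|^{-(n+sp)} dy + H_α(x)^{sp/α})` for a.e. `x ∈ E`. -/
theorem pointwise_fractional_michael_simon_convex
    (n : ℕ) (hn : 1 ≤ n) (α s p : ℝ)
    (hα : α ∈ Set.Ioo (0:ℝ) 1) (hs : s ∈ Set.Ioo (0:ℝ) 1) (hp : 0 < p) :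
    ∃ C : ℝ, 0 < C ∧
      ∀ (Ω : Set (EuclideanSpace ℝ (Fin (n+1)))), IsOpen Ω → Convex ℝ Ω →
      ∀ (Hα : EuclideanSpace ℝ (Fin (n+1)) → ℝ), Measurable Hα →
        (∀ x ∈ frontier Ω, 0 ≤ Hα x) →
        (∀ᵐ x ∂(μH[(n:ℝ)].restrict (frontier Ω)), IsFracMeanCurv n α Ω x (Hα x)) →
      ∀ (E : Set (EuclideanSpace ℝ (Fin (n+1)))), MeasurableSet E → E ⊆ frontier Ω →
        0 < μH[(n:ℝ)] E → μH[(n:ℝ)] E < ⊤ →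
        ∀ᵐ x ∂(μH[(n:ℝ)].restrict E),
          (μH[(n:ℝ)] E) ^ (-(s * p / (n:ℝ)))
            ≤ ENNReal.ofReal C *
              ((∫⁻ y in frontier Ω \ E,
                  ENNReal.ofReal (dist x y ^ (-((n:ℝ) + s * p))) ∂μH[(n:ℝ)])
                + ENNReal.ofReal (Hα x ^ (s * p / α))) := by
  have hα0 := hα.1
  have hs0 := hs.1
  have hn0 : (0:ℝ) < n := by exact_mod_cast hn
  set q : ℝ := s * p with hq
  have hq0 : 0 < q := mul_pos hs0 hp
  obtain ⟨v, hv⟩ : ∃ v, v = volume.real (ball (0 : EuclideanSpace ℝ (Fin (n+1))) 1) := ⟨_, rfl⟩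
  have hv0 : 0 < v := hv ▸ ENNReal.toReal_pos (measure_ball_pos _ _ one_pos).ne'
    measure_ball_lt_top.ne
  set k : ℝ := (32 / v) ^ (1 / (n:ℝ)) with hk
  have hk0 : 0 < k := by positivity
  have hkn : k ^ n = 32 / v := by
    rw [hk, one_div, Real.rpow_inv_natCast_pow (by positivity) (by omega)]
  set C₁ : ℝ := k ^ ((n:ℝ) + q)
  set C₂ : ℝ := (α * v / 8) ^ (-(q / α)) * k ^ q
  have hC₁ : 0 < C₁ := by positivity
  have hC₂ : 0 < C₂ := by positivity
  refine ⟨C₁ + C₂, by positivity, fun Ω ho hc Hα _ _ hcurv E hE hEΩ hEpos hEfin => ?_⟩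
  filter_upwards [ae_restrict_mem hE, ae_mono (Measure.restrict_mono hEΩ le_rfl) hcurv]
    with x hxE hxcurv
  have hxΩ : x ∉ Ω := fun h => (ho.inter_frontier_eq ▸ ⟨h, hEΩ hxE⟩ : x ∈ (∅ : Set _))
  set m : ℝ := (μH[(n:ℝ)] E).toReal with hm
  have hm0 : 0 < m := ENNReal.toReal_pos hEpos.ne' hEfin.ne
  have hmE : μH[(n:ℝ)] E = ENNReal.ofReal m := (ENNReal.ofReal_toReal hEfin.ne).symm
  set ρ : ℝ := m ^ (1 / (n:ℝ)) with hρ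
  have hρ0 : 0 < ρ := by positivity
  have hρn : ρ ^ n = m := by
    rw [hρ, one_div, Real.rpow_inv_natCast_pow hm0.le (by omega)]
  have hlhs : (μH[(n:ℝ)] E) ^ (-(q / (n:ℝ))) = ENNReal.ofReal (ρ ^ (-q)) := by
    rw [hmE, ENNReal.ofReal_rpow_of_pos hm0, hρ, ← Real.rpow_mul hm0.le]
    congr 2
    ring
  rw [hlhs]
  clear_value ρ
  rcases fracMeanCurv_ge_or_hausdorffMeasure_frontier_ge hα0 ho hc hxΩ hxcurv hv
    (mul_pos hk0 hρ0) with hH | hF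
  · refine le_trans ?_ (mul_le_mul_right le_add_self _)
    rw [← ENNReal.ofReal_mul (by positivity)]
    refine ENNReal.ofReal_le_ofReal ?_
    calc ρ ^ (-q) = C₂ * (α * v / 8 * (k * ρ) ^ (-α)) ^ (q / α) := by
          have h1 : -α * (q / α) = -q := by field_simp
          rw [Real.mul_rpow (by positivity) (by positivity),
            ← Real.rpow_mul (mul_pos hk0 hρ0).le, h1, Real.mul_rpow hk0.le hρ0.le]
          simp only [C₂]
          rw [Real.rpow_neg (by positivity : 0 ≤ α * v / 8), Real.rpow_neg hk0.le]
          field_simp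
      _ ≤ (C₁ + C₂) * Hα x ^ (q / α) := by
          gcongr
          linarith
  · refine le_trans ?_ (mul_le_mul_right le_self_add _)
    have hbig : 2 * μH[(n:ℝ)] E ≤ μH[(n:ℝ)] (frontier Ω ∩ ball x (k * ρ)) := by
      refine le_trans (le_of_eq ?_) hF
      rw [mul_pow, hkn, hρn, hmE, ← ENNReal.ofReal_ofNat, ← ENNReal.ofReal_mul (by norm_num)]
      congr 1
      field_simp
      norm_num
    have h1 := mul_le_setLIntegral_diff isClosed_frontier.measurableSet hE hxE hEfin.ne
      (q := (n:ℝ) + q) (by positivity) hbig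
    refine le_trans ?_ (mul_le_mul_right h1 _)
    rw [hmE, ← ENNReal.ofReal_mul (by positivity), ← ENNReal.ofReal_mul (by positivity)]
    refine ENNReal.ofReal_le_ofReal ?_
    calc ρ ^ (-q) = C₁ * ((k * ρ) ^ (-((n:ℝ) + q)) * m) := by
          rw [← hρn, Real.mul_rpow hk0.le hρ0.le, Real.rpow_neg hk0.le, neg_add,
            Real.rpow_add hρ0, Real.rpow_neg hρ0.le n, Real.rpow_natCast]
          field_simp
          simp [C₁]
      _ ≤ _ := by
          gcongr
          linarith
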